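/- Let L be a Lie algebra over a field F of characteristic 0 and let n be a positive integer. Then there exists a real polynomial f_n of degree n such that for every solvable ideal I of L of derived length n, every derivation D of L, and every natural number k, the ideal I + D(I) + ⋯ + Dᵏ(I) is solvable of derived length at most f_n(k). -/

import Mathlib

/-!
Write `I_k = I + D(I) + ⋯ + Dᵏ(I)` and `m = k + 1`. Expanding `D²ᵐ⁅a, b⁆` for `a, b ∈ I` by the
Leibniz rule, every term other than the central one `(2m choose m) ⁅Dᵐ a, Dᵐ b⁆` has a factor in
the ideal `I_k`. Dividing by the binomial coefficient gives `⁅I_m, I_m⁆ ≤ I_k + ⁅I, I⁆_(2m)`.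
Hence the `(k + 1)`-st derived ideal of `I_k` lies in `⁅I, I⁆_(2k)`, and the bound `ℓ_n(k)` for
derived length `n` satisfies `ℓ_(n+1)(k) = ℓ_n(2k) + k + 1`, that is `ℓ_n(k) = (2ⁿ - 1) k + n`.
-/

open LieAlgebra Polynomial

section Submodule

variable {R M : Type*} [Semiring R] [AddCommMonoid M] [Module R M]

/-- The submodule `N + f(N) + ⋯ + fᵏ(N)` for an endomorphism `f`; it is the module underlying
`derivationSum`. -/
def iterateSum (f : Module.End R M) (N : Submodule R M) (k : ℕ) : Submodule R M :=
  ⨆ j ∈ Finset.range (k + 1), N.map (f ^ j)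

variable (f : Module.End R M) (N : Submodule R M)

lemma iterateSum_zero : iterateSum f N 0 = N := by
  simp [iterateSum, Module.End.one_eq_id]

lemma iterateSum_succ (k : ℕ) :
    iterateSum f N (k + 1) = iterateSum f N k ⊔ N.map (f ^ (k + 1)) := by
  rw [iterateSum, Finset.range_add_one, Finset.iSup_insert, sup_comm, iterateSum]

lemma iterateSum_mono : Monotone (iterateSum f N) :=
  monotone_nat_of_le_succ fun k => by
    rw [iterateSum_succ]
    exact le_sup_left

lemma iterateSum_bot (k : ℕ) : iterateSum f ⊥ k = ⊥ := by
  simp [iterateSum]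

variable {N}

lemma iterate_mem_iterateSum {j k : ℕ} (hjk : j ≤ k) {a : M} (ha : a ∈ N) :
    f^[j] a ∈ iterateSum f N k := by
  rw [← Module.End.pow_apply]
  exact le_iSup₂ (f := fun j _ => N.map (f ^ j)) j (Finset.mem_range_succ_iff.2 hjk)
    (Submodule.mem_map_of_mem ha)

lemma apply_mem_iterateSum_succ {k : ℕ} {x : M} (hx : x ∈ iterateSum f N k) :
    f x ∈ iterateSum f N (k + 1) := by
  suffices h : iterateSum f N k ≤ (iterateSum f N (k + 1)).comap f from h hx
  refine iSup₂_le fun j hj => ?_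
  rintro _ ⟨a, ha, rfl⟩
  rw [Submodule.mem_comap, Module.End.pow_apply, ← Function.iterate_succ_apply' f]
  exact iterate_mem_iterateSum f (Nat.succ_le_of_lt (Finset.mem_range.1 hj)) ha

end Submodule

section LieAlgebra

variable {R L : Type*} [CommRing R] [LieRing L] [LieAlgebra R L]
  (D : LieDerivation R L L) (I : LieIdeal R L)

variable {I} in
lemma lie_iterate_mem_iterateSum (x : L) {a : L} (ha : a ∈ I) (j : ℕ) :
    ⁅x, D^[j] a⁆ ∈ iterateSum D.toLinearMap I.toSubmodule j := by
  induction j generalizing x with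
  | zero =>
    rw [iterateSum_zero]
    exact I.lie_mem ha
  | succ j ih =>
    have leibniz : ⁅x, D^[j + 1] a⁆ = D ⁅x, D^[j] a⁆ - ⁅D x, D^[j] a⁆ := by
      rw [D.apply_lie_eq_add, Function.iterate_succ_apply', add_sub_cancel_right]
    rw [leibniz]
    exact sub_mem (apply_mem_iterateSum_succ D.toLinearMap (ih x))
      (iterateSum_mono _ _ j.le_succ (ih (D x)))

/-- The Lie ideal `I + D(I) + ⋯ + Dᵏ(I)` for a derivation `D`, the ideal whose derived length is
to be bounded. -/
def derivationSum (k : ℕ) : LieIdeal R L where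
  __ := iterateSum D.toLinearMap I.toSubmodule k
  lie_mem {x m} hm := by
    suffices h : iterateSum D.toLinearMap I.toSubmodule k ≤
        (iterateSum D.toLinearMap I.toSubmodule k).comap (ad R L x) from h hm
    refine iSup₂_le fun j hj => ?_
    rintro _ ⟨a, ha, rfl⟩
    rw [Module.End.pow_apply]
    exact iterateSum_mono _ _ (Finset.mem_range_succ_iff.1 hj) (lie_iterate_mem_iterateSum D x ha j)

lemma derivationSum_toSubmodule (k : ℕ) :
    (derivationSum D I k).toSubmodule = iterateSum D.toLinearMap I.toSubmodule k :=
  rfl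

lemma derivationSum_zero : derivationSum D I 0 = I :=
  LieSubmodule.toSubmodule_injective (iterateSum_zero _ _)

lemma derivationSum_bot (k : ℕ) : derivationSum D ⊥ k = ⊥ :=
  LieSubmodule.toSubmodule_injective (iterateSum_bot _ _)

lemma derivationSum_mono : Monotone (derivationSum D I) :=
  fun _ _ h => iterateSum_mono D.toLinearMap I.toSubmodule h

variable {I}

lemma iterate_mem_derivationSum {j k : ℕ} (hjk : j ≤ k) {a : L} (ha : a ∈ I) :
    D^[j] a ∈ derivationSum D I k :=
  iterate_mem_iterateSum D.toLinearMap hjk ha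

lemma exists_add_iterate_of_mem_derivationSum_succ {k : ℕ} {x : L}
    (hx : x ∈ derivationSum D I (k + 1)) :
    ∃ u ∈ derivationSum D I k, ∃ a ∈ I, u + D^[k + 1] a = x := by
  rw [← LieSubmodule.mem_toSubmodule, derivationSum_toSubmodule, iterateSum_succ,
    Submodule.mem_sup] at hx
  obtain ⟨u, hu, _, ⟨a, ha, rfl⟩, rfl⟩ := hx
  exact ⟨u, hu, a, ha, by rw [Module.End.pow_apply]; rfl⟩

lemma lie_iterate_iterate_mem_derivationSum {i j k : ℕ} (hij : i ≤ k ∨ j ≤ k) {a b : L}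
    (ha : a ∈ I) (hb : b ∈ I) : ⁅D^[i] a, D^[j] b⁆ ∈ derivationSum D I k := by
  rcases hij with hi | hj
  · exact lie_mem_left R L _ _ _ (iterate_mem_derivationSum D hi ha)
  · exact lie_mem_right R L _ _ _ (iterate_mem_derivationSum D hj hb)

lemma centralBinom_nsmul_lie_iterate_mem (k : ℕ) {a b : L} (ha : a ∈ I) (hb : b ∈ I) :
    (k + 1).centralBinom • ⁅D^[k + 1] a, D^[k + 1] b⁆ ∈
      derivationSum D I k ⊔ derivationSum D ⁅I, I⁆ (2 * (k + 1)) := by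
  have leibniz := D.iterate_apply_lie (2 * (k + 1)) a b
  have center_mem : (k + 1, k + 1) ∈ Finset.HasAntidiagonal.antidiagonal (2 * (k + 1)) :=
    Finset.HasAntidiagonal.mem_antidiagonal.2 (two_mul _).symm
  rw [← Finset.add_sum_erase _ _ center_mem] at leibniz
  rw [Nat.centralBinom, ← sub_eq_of_eq_add leibniz]
  refine sub_mem (LieSubmodule.mem_sup_right ?_) (LieSubmodule.mem_sup_left (sum_mem ?_))
  · exact iterate_mem_derivationSum D le_rfl (LieSubmodule.lie_mem_lie ha hb)
  · rintro ⟨i, j⟩ hij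
    have hle : i ≤ k ∨ j ≤ k := by
      simp only [Finset.mem_erase, Finset.HasAntidiagonal.mem_antidiagonal, ne_eq,
        Prod.mk.injEq] at hij
      lia
    exact nsmul_mem (lie_iterate_iterate_mem_derivationSum D hle ha hb) _

lemma lie_sup_sup_le (A B : LieIdeal R L) : ⁅A ⊔ B, A ⊔ B⁆ ≤ ⁅A, A⁆ ⊔ B := by
  rw [LieSubmodule.sup_lie, LieSubmodule.lie_sup]
  exact sup_le (sup_le_sup_left (LieSubmodule.lie_le_right B A) _)
    ((LieSubmodule.lie_le_left B (A ⊔ B)).trans le_sup_right)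

variable [Algebra ℚ R]

lemma lie_iterate_mem_sup (k : ℕ) {a b : L} (ha : a ∈ I) (hb : b ∈ I) :
    ⁅D^[k + 1] a, D^[k + 1] b⁆ ∈
      derivationSum D I k ⊔ derivationSum D ⁅I, I⁆ (2 * (k + 1)) := by
  have isUnit_centralBinom : IsUnit ((k + 1).centralBinom : R) := by
    have h : ((k + 1).centralBinom : ℚ) ≠ 0 := mod_cast (k + 1).centralBinom_ne_zero
    simpa using h.isUnit.map (algebraMap ℚ R)
  have h := centralBinom_nsmul_lie_iterate_mem D k ha hb
  rw [← Nat.cast_smul_eq_nsmul R] at h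
  exact (Submodule.smul_mem_iff_of_isUnit _ isUnit_centralBinom).1 h

variable (I)

lemma lie_derivationSum_succ_le (k : ℕ) :
    ⁅derivationSum D I (k + 1), derivationSum D I (k + 1)⁆ ≤
      derivationSum D I k ⊔ derivationSum D ⁅I, I⁆ (2 * (k + 1)) := by
  rw [LieSubmodule.lie_le_iff]
  intro x hx y hy
  obtain ⟨u, hu, a, ha, rfl⟩ := exists_add_iterate_of_mem_derivationSum_succ D hx
  obtain ⟨v, hv, b, hb, rfl⟩ := exists_add_iterate_of_mem_derivationSum_succ D hy
  rw [add_lie, lie_add (D^[k + 1] a)]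
  exact add_mem (LieSubmodule.mem_sup_left (lie_mem_left R L _ _ _ hu))
    (add_mem (LieSubmodule.mem_sup_left (lie_mem_right R L _ _ _ hv))
      (lie_iterate_mem_sup D k ha hb))

lemma derivedSeriesOfIdeal_derivationSum_sup_le {k : ℕ} {B : LieIdeal R L}
    (hB : derivationSum D ⁅I, I⁆ (2 * k) ≤ B) :
    derivedSeriesOfIdeal R L (k + 1) (derivationSum D I k ⊔ B) ≤ B := by
  induction k with
  | zero =>
    rw [mul_zero, derivationSum_zero] at hB
    rw [derivationSum_zero]
    exact (lie_sup_sup_le I B).trans (sup_le hB le_rfl)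
  | succ k ih =>
    have lie_le : ⁅derivationSum D I (k + 1) ⊔ B, derivationSum D I (k + 1) ⊔ B⁆ ≤
        derivationSum D I k ⊔ B :=
      (lie_sup_sup_le _ B).trans <| sup_le
        ((lie_derivationSum_succ_le D I k).trans (sup_le_sup_left hB _)) le_sup_right
    rw [derivedSeriesOfIdeal_add]
    exact (derivedSeriesOfIdeal_mono lie_le _).trans
      (ih ((derivationSum_mono D _ (by lia)).trans hB))

lemma derivedSeriesOfIdeal_derivationSum_le (k : ℕ) :
    derivedSeriesOfIdeal R L (k + 1) (derivationSum D I k) ≤ derivationSum D ⁅I, I⁆ (2 * k) :=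
  (derivedSeriesOfIdeal_mono le_sup_left _).trans
    (derivedSeriesOfIdeal_derivationSum_sup_le D I le_rfl)

variable {I}

lemma derivedSeriesOfIdeal_derivationSum_eq_bot {n : ℕ}
    (hI : derivedSeriesOfIdeal R L n I = ⊥) (k : ℕ) :
    derivedSeriesOfIdeal R L ((2 ^ n - 1) * k + n) (derivationSum D I k) = ⊥ := by
  induction n generalizing I k with
  | zero =>
    rw [derivedSeriesOfIdeal_zero] at hI
    rw [hI, derivationSum_bot]
    exact eq_bot_mono (derivedSeriesOfIdeal_le_self _ _) rfl
  | succ n ih =>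
    have bound_succ : (2 ^ (n + 1) - 1) * k + (n + 1) =
        ((2 ^ n - 1) * (2 * k) + n) + (k + 1) := by
      zify [Nat.one_le_two_pow]
      ring
    rw [derivedSeriesOfIdeal_add] at hI
    rw [bound_succ, derivedSeriesOfIdeal_add]
    exact eq_bot_mono
      (derivedSeriesOfIdeal_mono (derivedSeriesOfIdeal_derivationSum_le D I k) _) (ih hI (2 * k))

end LieAlgebra

lemma exists_degree_eq_and_linear_le_floor_eval (a b : ℕ) {n : ℕ} (hn : n ≠ 0) :
    ∃ f : ℝ[X], f.degree = n ∧ ∀ k : ℕ, a * k + b ≤ ⌊f.eval (k : ℝ)⌋₊ := by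
  refine ⟨C (a + b + 1 : ℝ) * (X + C 1) ^ n, ?_, fun k => Nat.le_floor ?_⟩
  · rw [degree_C_mul (by positivity), degree_pow, degree_X_add_C, nsmul_one]
  · simp only [eval_mul, eval_C, eval_pow, eval_add, eval_X]
    calc ((a * k + b : ℕ) : ℝ) ≤ (a + b + 1) * (k + 1) := by
          norm_cast
          nlinarith
      _ ≤ (a + b + 1) * (k + 1) ^ n := by
          gcongr
          exact le_self_pow₀ (by simp) hn

theorem statement14_general {R L : Type*} [CommRing R] [Algebra ℚ R] [LieRing L] [LieAlgebra R L]
    {n : ℕ} {I : LieIdeal R L} (hI : derivedSeriesOfIdeal R L n I = ⊥)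
    (D : LieDerivation R L L) (k : ℕ) {J : LieIdeal R L}
    (hJ : J.toSubmodule =
      ⨆ j ∈ Finset.range (k + 1), Submodule.map (D.toLinearMap ^ j) I.toSubmodule) :
    derivedSeriesOfIdeal R L ((2 ^ n - 1) * k + n) J = ⊥ := by
  have J_eq : J = derivationSum D I k := LieSubmodule.toSubmodule_injective hJ
  rw [J_eq]
  exact derivedSeriesOfIdeal_derivationSum_eq_bot D hI k

/-- Let `L` be a Lie algebra over a field `F` of characteristic `0` and
let `n` be a positive integer. Then there exists a real polynomial `f_n` of degree `n`
such that for every solvable ideal `I` of `L` of derived length `n`, every derivation `D`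
of `L`, and every natural number `k`, the ideal `I + D(I) + ⋯ + Dᵏ(I)` is solvable of
derived length at most `f_n(k)`. -/
theorem statement14 (F L : Type*) [Field F] [CharZero F] [LieRing L] [LieAlgebra F L]
    (n : ℕ) (hn : 0 < n) :
    ∃ f : Polynomial ℝ, f.degree = n ∧
      ∀ I : LieIdeal F L,
        LieAlgebra.derivedSeriesOfIdeal F L n I = ⊥ →
        (∀ m < n, LieAlgebra.derivedSeriesOfIdeal F L m I ≠ ⊥) →
        ∀ D : LieDerivation F L L, ∀ k : ℕ,
          ∀ J : LieIdeal F L,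
            J.toSubmodule =
              (⨆ j ∈ Finset.range (k + 1), Submodule.map (D.toLinearMap ^ j) I.toSubmodule) →
            LieAlgebra.derivedSeriesOfIdeal F L ⌊f.eval (k : ℝ)⌋₊ J = ⊥ := by
  obtain ⟨f, hdeg, hle⟩ := exists_degree_eq_and_linear_le_floor_eval (2 ^ n - 1) n hn.ne'
  exact ⟨f, hdeg, fun I hI _ D k J hJ =>
    eq_bot_mono (derivedSeriesOfIdeal_antitone J (hle k)) (statement14_general hI D k hJ)⟩
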